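/- Every subgroup of order 12 of SL(2, Z/7Z) that contains -I and the order-3 matrix φ = [[0,-1],[1,-1]] and is nonabelian is isomorphic to the dicyclic group Dic3 of order 12 (and not to the dihedral group D12). -/

import Mathlib

/-!
Over a domain in which `2 ≠ 0`, the only involution of `SL(2, R)` is `-1`: if `A⁻¹ = A`, then `A`
equals its own adjugate, so it is a scalar matrix of determinant `1`. A dihedral group of order
greater than `2` has several involutions, so it does not embed in `SL(2, R)`.

Let `p` be an odd prime and `G` a nonabelian group of order `4p` with at most one involution. The
involution is central, so its product with an element of order `p` is an element `g` of order `2p`.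
Some `x` does not commute with `g`, and it conjugates `g` to a power `g ^ k` with `k² ≡ 1` modulo
`2p`, so `x * g * x⁻¹ = g⁻¹`. Then `x²` is a power of `g` that conjugation by `x` both fixes and
inverts, so it is the involution `g ^ p`. These are the defining relations of the dicyclic group,
called `QuaternionGroup p` in Mathlib.
-/

section Group

open Subgroup

variable {G : Type*} [Group G]

section QuaternionGroup

open QuaternionGroup

theorem zpow_cast_intCast_zmod {m : ℕ} {g : G} (hg : g ^ m = 1) (k : ℤ) :
    g ^ ((k : ZMod m).cast : ℤ) = g ^ k := by
  rw [ZMod.coe_intCast, ← zpow_eq_zpow_emod' k hg]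

variable {n : ℕ} {g x : G}

/-- The homomorphism from the dicyclic group `QuaternionGroup n` to `G` determined by elements `g`,
`x` satisfying its defining relations; the image of `a 1` is `g` and that of `xa 0` is `x`. Residues
modulo `2n` are turned into exponents by `ZMod.cast`, which for `n ≠ 0` picks the representative in
`[0, 2n)`. -/
def quaternionGroupLift (hg : g ^ (2 * n) = 1) (hx : x * x = g ^ n) (hconj : SemiconjBy x g g⁻¹) :
    QuaternionGroup n →* G :=
  have hswap (k : ℤ) : g ^ k * x = x * g ^ (-k) := by
    simpa using (hconj.zpow_right (-k)).eq.symm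
  MonoidHom.mk'
    (fun
      | a i => g ^ (i.cast : ℤ)
      | xa i => x * g ^ (i.cast : ℤ)) <| by
    rintro (i | i) (j | j) <;> obtain ⟨i, rfl⟩ := ZMod.intCast_surjective i <;>
      obtain ⟨j, rfl⟩ := ZMod.intCast_surjective j
    · simp only [a_mul_a, ← Int.cast_add, zpow_cast_intCast_zmod hg, zpow_add]
    · simp only [a_mul_xa, ← Int.cast_sub, zpow_cast_intCast_zmod hg]
      rw [← mul_assoc, hswap, mul_assoc, ← zpow_add, neg_add_eq_sub]
    · simp only [xa_mul_a, ← Int.cast_add, zpow_cast_intCast_zmod hg, zpow_add, mul_assoc]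
    · rw [xa_mul_xa, ← Int.cast_natCast, ← Int.cast_add, ← Int.cast_sub]
      simp only [zpow_cast_intCast_zmod hg]
      calc g ^ ((n : ℤ) + j - i) = g ^ n * g ^ (-i + j) := by
            rw [← zpow_natCast, ← zpow_add]; congr 1; ring
        _ = x * (g ^ i * x) * g ^ j := by rw [← hx, hswap, zpow_add]; simp only [mul_assoc]
        _ = x * g ^ i * (x * g ^ j) := by simp only [mul_assoc]

theorem quaternionGroupLift_a_intCast (hg : g ^ (2 * n) = 1) (hx : x * x = g ^ n)
    (hconj : SemiconjBy x g g⁻¹) (k : ℤ) : quaternionGroupLift hg hx hconj (a k) = g ^ k :=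
  zpow_cast_intCast_zmod hg k

theorem quaternionGroupLift_xa_intCast (hg : g ^ (2 * n) = 1) (hx : x * x = g ^ n)
    (hconj : SemiconjBy x g g⁻¹) (k : ℤ) : quaternionGroupLift hg hx hconj (xa k) = x * g ^ k :=
  congrArg (x * ·) (zpow_cast_intCast_zmod hg k)

theorem quaternionGroupLift_injective (hg : orderOf g = 2 * n) (hx : x * x = g ^ n)
    (hconj : SemiconjBy x g g⁻¹) (hxg : x ∉ zpowers g) :
    Function.Injective (quaternionGroupLift (hg ▸ pow_orderOf_eq_one g) hx hconj) := by
  rw [injective_iff_map_eq_one]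
  rintro (i | i) h <;> obtain ⟨i, rfl⟩ := ZMod.intCast_surjective i
  · rw [quaternionGroupLift_a_intCast, ← orderOf_dvd_iff_zpow_eq_one, hg,
      ← ZMod.intCast_zmod_eq_zero_iff_dvd] at h
    rw [h, a_zero]
  · rw [quaternionGroupLift_xa_intCast, mul_eq_one_iff_eq_inv] at h
    exact absurd (h ▸ inv_mem (zpow_mem_zpowers g i)) hxg

theorem quaternionGroupLift_surjective (hg : g ^ (2 * n) = 1) (hx : x * x = g ^ n)
    (hconj : SemiconjBy x g g⁻¹) (hindex : (zpowers g).index = 2) (hxg : x ∉ zpowers g) :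
    Function.Surjective (quaternionGroupLift hg hx hconj) := by
  intro y
  by_cases hy : y ∈ zpowers g
  · obtain ⟨k, rfl⟩ := mem_zpowers_iff.1 hy
    exact ⟨a k, quaternionGroupLift_a_intCast hg hx hconj k⟩
  · have hmem : x⁻¹ * y ∈ zpowers g := by
      rw [mul_mem_iff_of_index_two hindex, inv_mem_iff, iff_false_left hxg]
      exact hy
    obtain ⟨k, hk⟩ := mem_zpowers_iff.1 hmem
    exact ⟨xa k, by rw [quaternionGroupLift_xa_intCast, hk, mul_inv_cancel_left]⟩

theorem nonempty_mulEquiv_quaternionGroup (hg : orderOf g = 2 * n) (hx : x * x = g ^ n)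
    (hconj : SemiconjBy x g g⁻¹) (hindex : (zpowers g).index = 2) (hxg : x ∉ zpowers g) :
    Nonempty (G ≃* QuaternionGroup n) :=
  ⟨(MulEquiv.ofBijective _ ⟨quaternionGroupLift_injective hg hx hconj hxg,
    quaternionGroupLift_surjective _ hx hconj hindex hxg⟩).symm⟩

end QuaternionGroup

section Involutions

theorem subsingleton_involutions_of_injective {G' : Type*} [Group G'] {f : G →* G'}
    (hf : Function.Injective f) (hinv : {a : G' | orderOf a = 2}.Subsingleton) :
    {a : G | orderOf a = 2}.Subsingleton := fun a ha b hb =>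
  hf (hinv ((orderOf_injective f hf a).trans ha) ((orderOf_injective f hf b).trans hb))

theorem nontrivial_involutions_dihedralGroup {n : ℕ} (hn : n ≠ 1) :
    {a : DihedralGroup n | orderOf a = 2}.Nontrivial := by
  have := ZMod.nontrivial_iff.2 hn
  exact ⟨.sr 0, DihedralGroup.orderOf_sr 0, .sr 1, DihedralGroup.orderOf_sr 1, by simp⟩

theorem commute_of_orderOf_eq_two (hinv : {a : G | orderOf a = 2}.Subsingleton) {z : G}
    (hz : orderOf z = 2) (y : G) : Commute y z := by
  have hconj : orderOf (y * z * y⁻¹) = 2 := by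
    rw [← MulAut.conj_apply, MulEquiv.orderOf_eq, hz]
  exact mul_inv_eq_iff_eq_mul.1 (hinv hconj hz)

theorem exists_orderOf_eq_two_mul [Finite G] (hinv : {a : G | orderOf a = 2}.Subsingleton)
    (h2 : 2 ∣ Nat.card G) {p : ℕ} (hp : p.Prime) (hp2 : p ≠ 2) (hdvd : p ∣ Nat.card G) :
    ∃ g : G, orderOf g = 2 * p := by
  have := Fact.mk hp
  obtain ⟨z, hz⟩ := exists_prime_orderOf_dvd_card' 2 h2
  obtain ⟨y, hy⟩ := exists_prime_orderOf_dvd_card' p hdvd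
  have hcop : (orderOf y).Coprime (orderOf z) := by
    rw [hy, hz]
    exact (Nat.coprime_primes hp Nat.prime_two).2 hp2
  refine ⟨y * z, ?_⟩
  rw [(commute_of_orderOf_eq_two hinv hz y).orderOf_mul_eq_mul_orderOf_of_coprime hcop, hy, hz,
    mul_comm]

theorem mul_self_eq_pow_of_semiconjBy_inv (hinv : {a : G | orderOf a = 2}.Subsingleton) {n : ℕ}
    (hn : n ≠ 0) {g x : G} (hg : orderOf g = 2 * n) (hx : x ∉ zpowers g)
    (hxx : x * x ∈ zpowers g) (hconj : SemiconjBy x g g⁻¹) : x * x = g ^ n := by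
  have hgn : orderOf (g ^ n) = 2 := by
    rw [orderOf_pow_of_dvd hn (hg ▸ dvd_mul_left n 2), hg, Nat.mul_div_cancel _ (by omega)]
  have hself : (x * x)⁻¹ = x * x := by
    obtain ⟨k, hk⟩ := mem_zpowers_iff.1 hxx
    have h := hconj.zpow_right k
    rw [inv_zpow, hk] at h
    exact mul_right_cancel (h.eq.symm.trans (mul_assoc x x x).symm)
  refine hinv (orderOf_eq_prime ?_ ?_) hgn
  · rw [sq, ← inv_eq_iff_mul_eq_one, hself]
  · intro hone
    have hxord : orderOf x = 2 :=
      orderOf_eq_prime (by rw [sq, hone]) fun h => hx (h ▸ one_mem _)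
    exact hx (hinv hxord hgn ▸ npow_mem_zpowers g n)

end Involutions

theorem exists_not_commute_of_isCyclic_quotient_zpowers (hnab : ¬ ∀ a b : G, a * b = b * a) {g : G}
    [(zpowers g).Normal] [IsCyclic (G ⧸ zpowers g)] : ∃ x, ¬ Commute x g := by
  by_contra! hcomm
  have hker : (QuotientGroup.mk' (zpowers g)).ker ≤ center G := by
    rw [QuotientGroup.ker_mk', zpowers_le, mem_center_iff]
    exact hcomm
  have := MonoidHom.isMulCommutative_of_isCyclic_of_ker_le_center _ hker
  exact hnab mul_comm'

theorem two_mul_prime_dvd_sub_one_or_add_one {p : ℕ} (hp : p.Prime) (hp2 : p ≠ 2) {k : ℤ}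
    (h : (2 * p : ℤ) ∣ k * k - 1) : (2 * p : ℤ) ∣ k - 1 ∨ (2 * p : ℤ) ∣ k + 1 := by
  have hcop : IsCoprime (2 : ℤ) p := by
    exact_mod_cast ((Nat.coprime_primes Nat.prime_two hp).2 hp2.symm).isCoprime
  have hodd : Odd k := by
    have heven : Even (k * k - 1) := even_iff_two_dvd.2 (dvd_of_mul_right_dvd h)
    rw [Int.even_sub_one, Int.not_even_iff_odd] at heven
    exact (Int.odd_mul.1 heven).1
  have hp_dvd : (p : ℤ) ∣ (k - 1) * (k + 1) := by
    rw [show (k - 1) * (k + 1) = k * k - 1 by ring]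
    exact dvd_of_mul_left_dvd h
  exact ((Nat.prime_iff_prime_int.1 hp).dvd_or_dvd hp_dvd).imp
    (hcop.mul_dvd (hodd.sub_odd odd_one).two_dvd) (hcop.mul_dvd (hodd.add_odd odd_one).two_dvd)

theorem semiconjBy_inv_of_not_commute {p : ℕ} (hp : p.Prime) (hp2 : p ≠ 2) {g x : G}
    (hg : orderOf g = 2 * p) (hmem : x * g * x⁻¹ ∈ zpowers g) (hxx : Commute (x * x) g)
    (hx : ¬ Commute x g) : SemiconjBy x g g⁻¹ := by
  obtain ⟨k, hk⟩ := mem_zpowers_iff.1 hmem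
  have hconj : SemiconjBy x g (g ^ k) := hk ▸ SemiconjBy.conj_mk x g
  have hkk : g ^ (k * k) = g := by
    rw [zpow_mul]
    exact mul_right_cancel (((hconj.zpow_right k).mul_left hconj).eq.symm.trans hxx.eq)
  have horder : (orderOf g : ℤ) = 2 * p := by exact_mod_cast hg
  have hdvd : (2 * p : ℤ) ∣ k * k - 1 := by
    rw [← horder, orderOf_dvd_iff_zpow_eq_one, zpow_sub_one, hkk, mul_inv_cancel]
  rcases two_mul_prime_dvd_sub_one_or_add_one hp hp2 hdvd with h | h <;>
    rw [← horder, orderOf_dvd_iff_zpow_eq_one] at h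
  · rw [zpow_sub_one, mul_inv_eq_one] at h
    rw [h] at hconj
    exact absurd hconj hx
  · rw [zpow_add_one, mul_eq_one_iff_eq_inv] at h
    rwa [h] at hconj

theorem nonempty_mulEquiv_quaternionGroup_of_card_eq_four_mul_prime {p : ℕ} (hp : p.Prime)
    (hp2 : p ≠ 2) (hcard : Nat.card G = 4 * p) (hnab : ¬ ∀ a b : G, a * b = b * a)
    (hinv : {a : G | orderOf a = 2}.Subsingleton) : Nonempty (G ≃* QuaternionGroup p) := by
  have : Finite G :=
    Nat.finite_of_card_ne_zero (hcard ▸ mul_ne_zero four_ne_zero hp.ne_zero)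
  obtain ⟨g, hg⟩ : ∃ g : G, orderOf g = 2 * p :=
    exists_orderOf_eq_two_mul hinv (by omega) hp hp2 (hcard ▸ dvd_mul_left p 4)
  have hindex : (zpowers g).index = 2 := by
    have hmul := (zpowers g).index_mul_card
    rw [Nat.card_zpowers, hg, hcard] at hmul
    exact Nat.eq_of_mul_eq_mul_right (Nat.mul_pos two_pos hp.pos) (by omega)
  have := normal_of_index_eq_two hindex
  have : IsCyclic (G ⧸ zpowers g) := isCyclic_of_prime_card (p := 2) hindex
  obtain ⟨x, hx⟩ := exists_not_commute_of_isCyclic_quotient_zpowers hnab (g := g)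
  have hcomm {y : G} (hy : y ∈ zpowers g) : Commute y g := by
    obtain ⟨k, rfl⟩ := mem_zpowers_iff.1 hy
    exact (Commute.refl g).zpow_left k
  have hxg : x ∉ zpowers g := mt hcomm hx
  have hxx : x * x ∈ zpowers g := mul_self_mem_of_index_two hindex x
  have hconj : SemiconjBy x g g⁻¹ := semiconjBy_inv_of_not_commute hp hp2 hg
    (Normal.conj_mem ‹_› g (mem_zpowers g) x) (hcomm hxx) hx
  exact nonempty_mulEquiv_quaternionGroup hg
    (mul_self_eq_pow_of_semiconjBy_inv hinv hp.ne_zero hg hxg hxx hconj) hconj hindex hxg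

end Group

section SpecialLinearGroup

variable {R : Type*} [CommRing R] [NoZeroDivisors R]

theorem specialLinearGroup_eq_one_or_eq_neg_one_of_inv_eq_self (h2 : (2 : R) ≠ 0)
    {A : Matrix.SpecialLinearGroup (Fin 2) R} (hA : A⁻¹ = A) : A = 1 ∨ A = -1 := by
  have hentry (i j : Fin 2) : A⁻¹ i j = A i j := by rw [hA]
  simp only [Matrix.SpecialLinearGroup.SL2_inv_expl] at hentry
  have hdiag : A 1 1 = A 0 0 := by simpa using hentry 0 0
  have hzero {r : R} (hr : -r = r) : r = 0 := by
    have h2r : 2 * r = 0 := by linear_combination -hr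
    exact (mul_eq_zero.1 h2r).resolve_left h2
  have h01 : A 0 1 = 0 := hzero (by simpa using hentry 0 1)
  have h10 : A 1 0 = 0 := hzero (by simpa using hentry 1 0)
  have hdet : A 0 0 * A 0 0 = 1 := by
    have hdet := A.det_coe
    rwa [Matrix.det_fin_two, hdiag, h01, zero_mul, sub_zero] at hdet
  refine (mul_self_eq_one_iff.1 hdet).imp (fun h => ?_) (fun h => ?_) <;>
  · ext i j
    fin_cases i <;> fin_cases j <;> simp [hdiag, h01, h10, h]

theorem subsingleton_involutions_specialLinearGroup (h2 : (2 : R) ≠ 0) :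
    {A : Matrix.SpecialLinearGroup (Fin 2) R | orderOf A = 2}.Subsingleton := by
  have heq {A : Matrix.SpecialLinearGroup (Fin 2) R} (hA : orderOf A = 2) : A = -1 := by
    have hsq : A * A = 1 := by
      rw [← sq]
      exact orderOf_dvd_iff_pow_eq_one.1 hA.dvd
    have hself : A⁻¹ = A := inv_eq_iff_mul_eq_one.2 hsq
    refine (specialLinearGroup_eq_one_or_eq_neg_one_of_inv_eq_self h2 hself).resolve_left ?_
    rintro rfl
    simp at hA
  exact fun A hA B hB => (heq hA).trans (heq hB).symm

theorem stmt_11_general (h2 : (2 : R) ≠ 0) {p : ℕ} (hp : p.Prime) (hp2 : p ≠ 2)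
    (H : Subgroup (Matrix.SpecialLinearGroup (Fin 2) R)) (hcard : Nat.card H = 4 * p)
    (hnab : ¬ ∀ a b : H, a * b = b * a) :
    Nonempty (H ≃* QuaternionGroup p) ∧ ¬ Nonempty (H ≃* DihedralGroup (2 * p)) := by
  have hinv : {a : H | orderOf a = 2}.Subsingleton :=
    subsingleton_involutions_of_injective H.subtype_injective
      (subsingleton_involutions_specialLinearGroup h2)
  refine ⟨nonempty_mulEquiv_quaternionGroup_of_card_eq_four_mul_prime hp hp2 hcard hnab hinv, ?_⟩
  rintro ⟨e⟩
  have he : Function.Injective e.symm.toMonoidHom := e.symm.injective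
  exact (nontrivial_involutions_dihedralGroup (by omega)).not_subsingleton
    (subsingleton_involutions_of_injective he hinv)

end SpecialLinearGroup

theorem stmt_11 (φ : Matrix.SpecialLinearGroup (Fin 2) (ZMod 7))
    (hφ : (φ : Matrix (Fin 2) (Fin 2) (ZMod 7)) = !![0, -1; 1, -1])
    (H : Subgroup (Matrix.SpecialLinearGroup (Fin 2) (ZMod 7)))
    (hcard : Nat.card H = 12) (hneg : (-1 : Matrix.SpecialLinearGroup (Fin 2) (ZMod 7)) ∈ H)
    (hφH : φ ∈ H) (hnab : ¬ ∀ a b : H, a * b = b * a) :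
    Nonempty (H ≃* QuaternionGroup 3) ∧ ¬ Nonempty (H ≃* DihedralGroup 6) := by
  have : Fact (Nat.Prime 7) := ⟨by norm_num⟩
  exact stmt_11_general (by decide +revert) Nat.prime_three (by decide) H hcard hnab
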